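/- Let σ : ℝ → ℝ be correlating, meaning that for every fixed k the sequence n ↦ INAL(M_k, σ) is noticeable (i.e., Ω(n^{-c}) for some c). If (f_n) is a sequence of Boolean functions f_n : {±1}^n → {±1} such that INAL(f_n, σ) is negligible, then (f_n) is high-degree, i.e., for every fixed k the sequence n ↦ W^{≤k}(f_n) is negligible. -/

import Mathlib

open MeasureTheory ProbabilityTheory Filter Finset Asymptotics
open scoped NNReal ENNReal

noncomputable section

/-- The ±1 value encoded by a Boolean bit. -/
def bsign (b : Bool) : ℝ := if b then 1 else -1

/-- Expectation over a uniformly random point of the Boolean cube `{±1}^n`. -/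
def bExp (n : ℕ) (g : (Fin n → Bool) → ℝ) : ℝ :=
  (∑ x : Fin n → Bool, g x) / 2 ^ n

/-- A function on the Boolean cube is Boolean(-valued) if it takes values in `{±1}`. -/
def IsBooleanFn {n : ℕ} (f : (Fin n → Bool) → ℝ) : Prop := ∀ x, f x = 1 ∨ f x = -1

/-- Initialization distribution: the weights `w : ℝⁿ` and the bias `b` are
iid `N(0, 1/n)` Gaussians. -/
def initMeasure (n : ℕ) : Measure ((Fin n → ℝ) × ℝ) :=
  (Measure.pi fun _ : Fin n => gaussianReal 0 (n : ℝ≥0)⁻¹).prod (gaussianReal 0 (n : ℝ≥0)⁻¹)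

/-- Initial alignment `INAL(f, σ) = E_{w,b} [ (E_x [f(x) σ(wᵀx + b)])² ]`. -/
def INAL (n : ℕ) (f : (Fin n → Bool) → ℝ) (σ : ℝ → ℝ) : ℝ :=
  ∫ θ : (Fin n → ℝ) × ℝ,
    (bExp n fun x => f x * σ (∑ i, θ.1 i * bsign (x i) + θ.2)) ^ 2 ∂ initMeasure n

/-- The `v`-Gaussian smoothing `Σ_v(t) = E_{Y ∼ N(0,v)} [σ(Y + t)]`. -/
def gsmooth (σ : ℝ → ℝ) (v : ℝ) (t : ℝ) : ℝ :=
  ∫ y, σ (y + t) ∂ gaussianReal 0 v.toNNReal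

/-- `σ` is polynomially bounded: `|σ(x)| ≤ C |x|^c + C` for some `C, c > 0`. -/
def PolyBounded (σ : ℝ → ℝ) : Prop :=
  ∃ C : ℝ, 0 < C ∧ ∃ c : ℕ, 0 < c ∧ ∀ x : ℝ, |σ x| ≤ C * |x| ^ c + C

/-- `σ` is expressive: measurable, polynomially bounded, and its Gaussian smoothing has no
two consecutive vanishing derivatives at `0`. -/
def Expressive (σ : ℝ → ℝ) : Prop :=
  Measurable σ ∧ PolyBounded σ ∧
    ∀ m : ℕ, iteratedDeriv m (gsmooth σ 1) 0 ≠ 0 ∨ iteratedDeriv (m + 1) (gsmooth σ 1) 0 ≠ 0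

/-- A nonnegative sequence is negligible if it decays faster than any inverse polynomial. -/
def Negligible (g : ℕ → ℝ) : Prop :=
  ∀ c : ℕ, Tendsto (fun n : ℕ => (n : ℝ) ^ c * g n) atTop (nhds 0)

/-- Fourier character `M_S(x) = ∏_{i ∈ S} x_i`. -/
def chi {n : ℕ} (S : Finset (Fin n)) (x : Fin n → Bool) : ℝ := ∏ i ∈ S, bsign (x i)

/-- Fourier coefficient `f̂(S) = E_x [f(x) M_S(x)]`. -/
def fourierCoef (n : ℕ) (f : (Fin n → Bool) → ℝ) (S : Finset (Fin n)) : ℝ :=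
  bExp n fun x => f x * chi S x

/-- Fourier weight up to degree `k`: `W^{≤k}(f)`. -/
def weightLE (n k : ℕ) (f : (Fin n → Bool) → ℝ) : ℝ :=
  ∑ S ∈ Finset.univ.filter (fun S : Finset (Fin n) => S.card ≤ k), fourierCoef n f S ^ 2

/-- Fourier weight strictly below degree `k`: `W^{<k}(f)`. -/
def weightLT (n k : ℕ) (f : (Fin n → Bool) → ℝ) : ℝ :=
  ∑ S ∈ Finset.univ.filter (fun S : Finset (Fin n) => S.card < k), fourierCoef n f S ^ 2

/-- The monomial `M_k(x) = ∏_{i=1}^k x_i`, viewed as a function on `{±1}^n`. -/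
def monomial (n k : ℕ) : (Fin n → Bool) → ℝ :=
  fun x => ∏ i ∈ Finset.univ.filter (fun i : Fin n => (i : ℕ) < k), bsign (x i)

/-- The `N`-extension of `f : {±1}^n → ℝ` (for `n ≤ N`): ignore the last `N - n` coordinates. -/
def extendFn (n N : ℕ) (f : (Fin n → Bool) → ℝ) : (Fin N → Bool) → ℝ :=
  fun x => f fun i => if h : (i : ℕ) < N then x ⟨i, h⟩ else false

/-- Cross-predictability of (the uniform distribution on) the orbit of `f` under coordinate
permutations, with uniform inputs: `CP(orb(f), U^N)`. -/
def orbitCP (N : ℕ) (f : (Fin N → Bool) → ℝ) : ℝ :=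
  (∑ π : Equiv.Perm (Fin N), ∑ π' : Equiv.Perm (Fin N),
      (bExp N fun x => f (fun i => x (π i)) * f (fun i => x (π' i))) ^ 2) /
    (Fintype.card (Equiv.Perm (Fin N))) ^ 2

/-- `N = n^{1+ε}` (rounded up). -/
def Ndim (ε : ℝ) (n : ℕ) : ℕ := ⌈(n : ℝ) ^ (1 + ε)⌉₊

/-!
Flipping the signs of the weights by a uniform `z ∈ {±1}ⁿ` does not change their law. As a function
of `z`, the flipped alignment `E_x[f(x) σ((z·w)ᵀx + b)]` has Fourier coefficients
`f̂(S) · E_x[χ_S(x) σ(wᵀx + b)]`, so Bessel's inequality and averaging over `(w, b)` give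
`W^{=j}(f) · INAL(M_j, σ) ≤ INAL(f, σ)`; permuting the weights shows that `INAL(χ_S, σ)` depends on
`|S|` only. Summing over `j ≤ k` concludes, since every `INAL(M_j, σ)` is noticeable.

The exchange of averages requires `σ` to be square-integrable for the law of `wᵀx + b`. A Bochner
integral which is not zero has an integrable integrand, so noticeability makes the alignments with
`M_0` and `M_1` square-integrable in some dimension. In the variables `b ± w_1` they are the sum and
the difference of two copies of one function, which is therefore in `L²`; undoing the remaining
averages over `x` gives `σ ∈ L²(N(0, s))` for some small `s > 0`. Finally `s` is enlarged step by
step up to the variance of `wᵀx + b`, because conditionally on the other directions the alignment is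
an average of `σ` and contracted copies of `σ`.
-/

section GaussianDomination

theorem exists_gaussianPDFReal_le_mul (m c : ℝ) {v s : ℝ≥0} (hv : v ≠ 0) (hvs : v < s) :
    ∃ K : ℝ, 0 ≤ K ∧ ∀ x, gaussianPDFReal c v x ≤ K * gaussianPDFReal m s x := by
  have hv_pos : (0 : ℝ) < v := by positivity
  have hvs_real : (v : ℝ) < s := by exact_mod_cast hvs
  have hs_pos : (0 : ℝ) < s := hv_pos.trans hvs_real
  have hsub_pos : (0 : ℝ) < s - v := sub_pos.2 hvs_real
  refine ⟨(√(2 * Real.pi * v))⁻¹ * √(2 * Real.pi * s) * Real.exp ((m - c) ^ 2 / (2 * (s - v))),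
    by positivity, fun x => ?_⟩
  have complete_square : (m - c) ^ 2 / (2 * ((s : ℝ) - v)) + -(x - m) ^ 2 / (2 * s)
      - (-(x - c) ^ 2 / (2 * v)) =
        ((s - v) * (x - m) + s * (m - c)) ^ 2 / (2 * s * v * (s - v)) := by
    field_simp
    ring
  have exp_le : Real.exp (-(x - c) ^ 2 / (2 * v)) ≤
      Real.exp ((m - c) ^ 2 / (2 * (s - v))) * Real.exp (-(x - m) ^ 2 / (2 * s)) := by
    rw [← Real.exp_add, Real.exp_le_exp, ← sub_nonneg, complete_square]
    positivity
  calc gaussianPDFReal c v x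
      ≤ (√(2 * Real.pi * v))⁻¹ *
        (Real.exp ((m - c) ^ 2 / (2 * (s - v))) * Real.exp (-(x - m) ^ 2 / (2 * s))) := by
        rw [gaussianPDFReal]
        gcongr
    _ = _ := by
        rw [gaussianPDFReal]
        field_simp

theorem memLp_gaussianReal_of_lt {E : Type*} [NormedAddCommGroup E] {g : ℝ → E} {p : ℝ≥0∞}
    {m : ℝ} {s : ℝ≥0} (hg : MemLp g p (gaussianReal m s)) (c : ℝ) {v : ℝ≥0} (hvs : v < s) :
    MemLp g p (gaussianReal c v) := by
  rcases eq_or_ne v 0 with rfl | hv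
  · rw [gaussianReal_zero_var]
    exact (memLp_const (g c)).ae_eq (ae_dirac_eq (a := c) ▸ rfl)
  obtain ⟨K, hK, pdf_le⟩ := exists_gaussianPDFReal_le_mul m c hv hvs
  refine hg.of_measure_le_smul (c := ENNReal.ofReal K) ENNReal.ofReal_ne_top ?_
  rw [gaussianReal_of_var_ne_zero _ hv, gaussianReal_of_var_ne_zero _ (pos_of_gt hvs).ne',
    ← withDensity_smul _ (measurable_gaussianPDF m s)]
  refine withDensity_mono (ae_of_all _ fun x => ?_)
  simp only [gaussianPDF, Pi.smul_apply, smul_eq_mul, ← ENNReal.ofReal_mul hK]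
  exact ENNReal.ofReal_le_ofReal (pdf_le x)

theorem measurePreserving_affine_gaussianReal (ρ c m : ℝ) (v : ℝ≥0) :
    MeasurePreserving (fun t => ρ * t + c) (gaussianReal m v)
      (gaussianReal (ρ * m + c) (NNReal.mk (ρ ^ 2) (sq_nonneg ρ) * v)) :=
  MeasurePreserving.comp
    ⟨measurable_add_const c, gaussianReal_map_add_const c⟩
    ⟨measurable_const_mul ρ, gaussianReal_map_const_mul ρ⟩

end GaussianDomination

/-- The functions that are square-integrable against every centred Gaussian of variance less
than `V`. Only an open range of variances makes the class invariant under translations. -/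
def gaussianL2Below (V : ℝ≥0) : Submodule ℝ (ℝ → ℝ) where
  carrier := {g | ∀ v < V, MemLp g 2 (gaussianReal 0 v)}
  add_mem' hg hh v hv := (hg v hv).add (hh v hv)
  zero_mem' _ _ := MemLp.zero
  smul_mem' c _ hg v hv := (hg v hv).const_smul c

namespace gaussianL2Below

variable {V V' : ℝ≥0} {g : ℝ → ℝ}

theorem antitone : Antitone gaussianL2Below :=
  fun _ _ hV _ hg v hv => hg v (hv.trans_le hV)

theorem mem_of_memLp (hg : MemLp g 2 (gaussianReal 0 V)) : g ∈ gaussianL2Below V :=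
  fun _ hv => memLp_gaussianReal_of_lt hg 0 hv

theorem comp_affine (hV : 0 < V) {ρ : ℝ} (hρ : ρ ^ 2 * V' ≤ V) (c : ℝ)
    (hg : g ∈ gaussianL2Below V) : (fun t => g (ρ * t + c)) ∈ gaussianL2Below V' := by
  intro v hv
  have image_var_lt : NNReal.mk (ρ ^ 2) (sq_nonneg ρ) * v < V := by
    rw [← NNReal.coe_lt_coe, NNReal.coe_mul, NNReal.coe_mk]
    rcases eq_or_ne ρ 0 with rfl | hρ0
    · simpa using hV
    · have : (v : ℝ) < V' := mod_cast hv
      exact lt_of_lt_of_le (by gcongr) hρ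
  obtain ⟨s, lt_s, s_lt⟩ := exists_between image_var_lt
  exact (memLp_gaussianReal_of_lt (hg s s_lt) _ lt_s).comp_measurePreserving
    (measurePreserving_affine_gaussianReal ρ c 0 v)

theorem comp_add_const (hV : 0 < V) (hg : g ∈ gaussianL2Below V) (c : ℝ) :
    (fun t => g (t + c)) ∈ gaussianL2Below V := by
  simpa using comp_affine hV (ρ := 1) (by simp) c hg

theorem aestronglyMeasurable (hV : 0 < V) (hg : g ∈ gaussianL2Below V) :
    AEStronglyMeasurable g volume := by
  obtain ⟨v, v_pos, v_lt⟩ := exists_between hV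
  exact (hg v v_lt).1.mono_ac (gaussianReal_absolutelyContinuous' 0 v_pos.ne')

end gaussianL2Below

section SumAndDifference

variable {X : Type*} [MeasurableSpace X] {μ : Measure X} {g : X → ℝ}

theorem aestronglyMeasurable_of_prod_mul [SFinite μ]
    (hg : AEStronglyMeasurable (fun p : X × X => g p.1 * g p.2) (μ.prod μ)) :
    AEStronglyMeasurable g μ := by
  have slices := hg.prodMk_left
  by_cases hex : ∃ x, g x ≠ 0 ∧ AEStronglyMeasurable (fun y => g x * g y) μ
  · obtain ⟨x, gx_ne, hx⟩ := hex
    simpa [inv_mul_cancel_left₀ gx_ne] using hx.const_mul (g x)⁻¹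
  · have ae_zero : g =ᵐ[μ] fun _ => 0 := by
      filter_upwards [slices] with x hx
      by_contra gx_ne
      exact hex ⟨x, gx_ne, hx⟩
    exact aestronglyMeasurable_const.congr ae_zero.symm

theorem memLp_two_of_integrable_sq_add_of_integrable_sq_sub [IsFiniteMeasure μ]
    (hadd : Integrable (fun p : X × X => (g p.1 + g p.2) ^ 2) (μ.prod μ))
    (hsub : Integrable (fun p : X × X => (g p.1 - g p.2) ^ 2) (μ.prod μ)) : MemLp g 2 μ := by
  have measurable_mul : AEStronglyMeasurable (fun p : X × X => g p.1 * g p.2) (μ.prod μ) := by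
    refine ((hadd.sub hsub).const_mul (1 / 4)).aestronglyMeasurable.congr (ae_of_all _ fun p => ?_)
    simp only [Pi.sub_apply]
    ring
  have integrable_sq_add_sq :
      Integrable (fun p : X × X => g p.1 ^ 2 + g p.2 ^ 2) (μ.prod μ) := by
    refine ((hadd.add hsub).const_mul (1 / 2)).congr (ae_of_all _ fun p => ?_)
    simp only [Pi.add_apply]
    ring
  rw [memLp_two_iff_integrable_sq (aestronglyMeasurable_of_prod_mul measurable_mul)]
  rcases eq_zero_or_neZero μ with rfl | _
  · exact integrable_zero_measure
  obtain ⟨x, hx⟩ := integrable_sq_add_sq.prod_right_ae.exists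
  refine (hx.sub (integrable_const (g x ^ 2))).congr (ae_of_all _ fun y => ?_)
  simp only [Pi.sub_apply, add_sub_cancel_left]

end SumAndDifference

section Doubling

variable {V : Submodule ℝ (ℝ → ℝ)} {g : ℝ → ℝ}

-- Writing `τ_a g = g (· + a)`, the operators `D_a = τ_a + τ_{-a}` satisfy `D_a² = D_{2a} + 2`, so
-- `2 g = D_a (D_a g) - D_{2a} g`.
theorem mem_of_ae_add_translates_mem (hV : ∀ h ∈ V, ∀ c : ℝ, (fun t => h (t + c)) ∈ V)
    (hg : ∀ᵐ a : ℝ, (fun t => g (t + a) + g (t - a)) ∈ V) : g ∈ V := by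
  have double_quasi : Measure.QuasiMeasurePreserving (fun a : ℝ => 2 * a) volume volume :=
    Measure.quasiMeasurePreserving_smul volume (two_ne_zero (α := ℝ))
  obtain ⟨a, ha, h2a⟩ := (hg.and (double_quasi.ae hg)).exists
  have twice_mem := V.sub_mem (V.add_mem (hV _ ha a) (hV _ ha (-a))) h2a
  convert V.smul_mem (1 / 2) twice_mem using 1
  funext t
  simp only [Pi.smul_apply, Pi.sub_apply, Pi.add_apply, smul_eq_mul]
  ring_nf

end Doubling

theorem map_eq_mul_map_one (L : StrongDual ℝ ℝ) (t : ℝ) : L t = t * L 1 := by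
  rw [← smul_eq_mul, ← map_smul, smul_eq_mul, mul_one]

/-- `μ` is the centred Gaussian measure with covariance form `q`: the random variable `L` has law
`N(0, q L)` under `μ` for every functional `L`. -/
def IsCenteredGaussian {E : Type*} [NormedAddCommGroup E] [NormedSpace ℝ E] [MeasurableSpace E]
    (μ : Measure E) (q : StrongDual ℝ E → ℝ) : Prop :=
  ∀ L, charFunDual μ L = Complex.exp (-(q L / 2 : ℝ))

namespace IsCenteredGaussian

theorem gaussianReal_zero (v : ℝ≥0) :
    IsCenteredGaussian (gaussianReal 0 v) fun L => v * L 1 ^ 2 := by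
  intro L
  have hL : (L : ℝ → ℝ) = fun t => L 1 * t := by
    funext t
    rw [map_eq_mul_map_one, mul_comm]
  rw [charFunDual_eq_charFun_map_one, hL, gaussianReal_map_const_mul, charFun_gaussianReal]
  push_cast
  ring_nf

variable {E F : Type*} [NormedAddCommGroup E] [NormedSpace ℝ E] [MeasurableSpace E]
  [NormedAddCommGroup F] [NormedSpace ℝ F] [MeasurableSpace F]
  {μ : Measure E} {ν : Measure F} {q : StrongDual ℝ E → ℝ} {r : StrongDual ℝ F → ℝ}

theorem prod [SFinite μ] [SFinite ν] (hμ : IsCenteredGaussian μ q) (hν : IsCenteredGaussian ν r) :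
    IsCenteredGaussian (μ.prod ν) fun L =>
      q (L ∘SL ContinuousLinearMap.inl ℝ E F) + r (L ∘SL ContinuousLinearMap.inr ℝ E F) := by
  intro L
  rw [charFunDual_prod, hμ, hν, ← Complex.exp_add]
  push_cast
  ring_nf

theorem pi {ι : Type*} [Fintype ι] [DecidableEq ι] [SigmaFinite μ] (hμ : IsCenteredGaussian μ q) :
    IsCenteredGaussian (Measure.pi fun _ : ι => μ) fun L =>
      ∑ i, q (L ∘SL ContinuousLinearMap.single ℝ (fun _ => E) i) := by
  intro L
  simp only [charFunDual_pi, hμ _, ← Complex.exp_sum, ← Complex.ofReal_neg, ← Complex.ofReal_sum,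
    Finset.sum_neg_distrib, Finset.sum_div]

theorem measurePreserving [BorelSpace E] [BorelSpace F] [SecondCountableTopology F]
    [CompleteSpace F] [IsFiniteMeasure μ] [IsFiniteMeasure ν]
    (hμ : IsCenteredGaussian μ q) (hν : IsCenteredGaussian ν r) (T : E →L[ℝ] F)
    (hT : ∀ L, q (L ∘SL T) = r L) : MeasurePreserving T μ ν := by
  refine ⟨T.continuous.measurable, Measure.ext_of_charFunDual (funext fun L => ?_)⟩
  rw [charFunDual_map, hμ, hν, hT]

end IsCenteredGaussian

section ParameterLaws

variable {n : ℕ}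

instance : IsProbabilityMeasure (initMeasure n) := by
  unfold initMeasure
  infer_instance

theorem isCenteredGaussian_initMeasure :
    IsCenteredGaussian (initMeasure n) fun L =>
      (∑ i, L (Pi.single i 1, 0) ^ 2 + L (0, 1) ^ 2) / n := by
  have gaussian := IsCenteredGaussian.gaussianReal_zero (n : ℝ≥0)⁻¹
  rw [initMeasure]
  convert (gaussian.pi (ι := Fin n)).prod gaussian using 1
  funext L
  simp [← Finset.mul_sum, ← mul_add, div_eq_inv_mul]

/-- The affine form `(w, b) ↦ wᵀx + b` computed by a neuron on the input `x`. -/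
def preactivation (x : Fin n → Bool) : StrongDual ℝ ((Fin n → ℝ) × ℝ) :=
  (∑ i, bsign (x i) • ContinuousLinearMap.proj i) ∘SL ContinuousLinearMap.fst ℝ _ _ +
    ContinuousLinearMap.snd ℝ _ _

theorem preactivation_apply (x : Fin n → Bool) (θ : (Fin n → ℝ) × ℝ) :
    preactivation x θ = ∑ i, θ.1 i * bsign (x i) + θ.2 := by
  simp [preactivation, mul_comm]

theorem preactivation_single (x : Fin n → Bool) (i : Fin n) :
    preactivation x (Pi.single i 1, 0) = bsign (x i) := by
  simp [preactivation_apply, Pi.single_apply]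

theorem preactivation_zero_one (x : Fin n → Bool) : preactivation x (0, 1) = 1 := by
  simp [preactivation_apply]

theorem bsign_sq (b : Bool) : bsign b ^ 2 = 1 := by
  cases b <;> simp [bsign]

theorem measurePreserving_preactivation (hn : n ≠ 0) (x : Fin n → Bool) :
    MeasurePreserving (preactivation x) (initMeasure n) (gaussianReal 0 (1 + (n : ℝ≥0)⁻¹)) := by
  refine isCenteredGaussian_initMeasure.measurePreserving
    (.gaussianReal_zero _) _ fun L => ?_
  simp only [ContinuousLinearMap.comp_apply, preactivation_single, preactivation_zero_one,
    map_eq_mul_map_one L (bsign _), mul_pow, bsign_sq, one_mul, Finset.sum_const,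
    Finset.card_univ, Fintype.card_fin, nsmul_eq_mul]
  push_cast
  field_simp

/-- Replace the preactivation on the all-ones input by `t`, moving `θ` along `(1, …, 1)` only. -/
def resample (n : ℕ) : ((Fin n → ℝ) × ℝ) × ℝ →L[ℝ] (Fin n → ℝ) × ℝ :=
  ContinuousLinearMap.fst ℝ _ _ + (((n : ℝ) + 1)⁻¹ • (ContinuousLinearMap.snd ℝ _ _ -
    preactivation (fun _ => true) ∘SL ContinuousLinearMap.fst ℝ _ _)).smulRight (1, 1)

theorem resample_apply (θ : (Fin n → ℝ) × ℝ) (t : ℝ) :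
    resample n (θ, t) =
      θ + (((n : ℝ) + 1)⁻¹ * (t - preactivation (fun _ => true) θ)) • (1, 1) := by
  simp [resample]

theorem measurePreserving_resample (hn : n ≠ 0) :
    MeasurePreserving (resample n) ((initMeasure n).prod (gaussianReal 0 (1 + (n : ℝ≥0)⁻¹)))
      (initMeasure n) := by
  refine (isCenteredGaussian_initMeasure.prod (.gaussianReal_zero _)).measurePreserving
    isCenteredGaussian_initMeasure _ fun L => ?_
  have sum_coords : ∑ i, L (Pi.single i 1, 0) + L (0, 1) = L (1, 1) := by
    rw [← map_sum, ← map_add]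
    congr 1
    ext i <;> simp [Prod.fst_sum, Prod.snd_sum, Finset.sum_apply, Pi.single_apply]
  simp only [ContinuousLinearMap.comp_apply, ContinuousLinearMap.inl_apply,
    ContinuousLinearMap.inr_apply, resample_apply, preactivation_single, preactivation_zero_one,
    map_zero, map_add, map_smul, smul_eq_mul, bsign, if_true]
  have sum_shift_sq (c : ℝ) : ∑ i, (L (Pi.single i 1, 0) + c) ^ 2 =
      ∑ i, L (Pi.single i 1, 0) ^ 2 + 2 * c * ∑ i, L (Pi.single i 1, 0) + n * c ^ 2 := by
    simp only [add_sq, Finset.sum_add_distrib, ← Finset.mul_sum, ← Finset.sum_mul,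
      Finset.sum_const, Finset.card_univ, Fintype.card_fin, nsmul_eq_mul]
    ring
  rw [sum_shift_sq, eq_sub_of_add_eq sum_coords]
  push_cast
  field_simp
  ring

/-- `(ω, u, v) ↦ (w, b)` with `w = (a, ω)`, where `a` and `b` solve `b + a = u`, `b - a = v`. -/
def splitFirstWeight (m : ℕ) : (Fin m → ℝ) × (ℝ × ℝ) →L[ℝ] (Fin (m + 1) → ℝ) × ℝ :=
  (ContinuousLinearMap.pi (Fin.cons
    ((1 / 2 : ℝ) • (ContinuousLinearMap.fst ℝ ℝ ℝ - ContinuousLinearMap.snd ℝ ℝ ℝ) ∘SL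
      ContinuousLinearMap.snd ℝ _ _)
    fun i => ContinuousLinearMap.proj i ∘SL ContinuousLinearMap.fst ℝ _ _)).prod
  ((1 / 2 : ℝ) • (ContinuousLinearMap.fst ℝ ℝ ℝ + ContinuousLinearMap.snd ℝ ℝ ℝ) ∘SL
    ContinuousLinearMap.snd ℝ _ _)

theorem splitFirstWeight_apply {m : ℕ} (ω : Fin m → ℝ) (u v : ℝ) :
    splitFirstWeight m (ω, u, v) = (Fin.cons ((u - v) / 2) ω, (u + v) / 2) := by
  ext i
  · cases i using Fin.cases <;> simp [splitFirstWeight, div_eq_inv_mul]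
  · simp [splitFirstWeight, div_eq_inv_mul, mul_add]

theorem measurePreserving_splitFirstWeight (m : ℕ) :
    MeasurePreserving (splitFirstWeight m)
      ((Measure.pi fun _ : Fin m => gaussianReal 0 ((m + 1 : ℕ) : ℝ≥0)⁻¹).prod
        ((gaussianReal 0 (2 * ((m + 1 : ℕ) : ℝ≥0)⁻¹)).prod
          (gaussianReal 0 (2 * ((m + 1 : ℕ) : ℝ≥0)⁻¹))))
      (initMeasure (m + 1)) := by
  refine ((IsCenteredGaussian.gaussianReal_zero _).pi.prod
    ((IsCenteredGaussian.gaussianReal_zero _).prod (.gaussianReal_zero _))).measurePreserving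
      isCenteredGaussian_initMeasure _ fun L => ?_
  have image_single (i : Fin m) :
      splitFirstWeight m (Pi.single i 1, 0) = (Pi.single i.succ 1, 0) := by
    rw [← Prod.mk_zero_zero, splitFirstWeight_apply]
    ext j
    · cases j using Fin.cases <;> simp [Pi.single_apply]
    · simp
  have image_left : splitFirstWeight m (0, 1, 0) =
      (1 / 2 : ℝ) • (Pi.single 0 1, 0) + (1 / 2 : ℝ) • (0, 1) := by
    rw [splitFirstWeight_apply]
    ext j
    · cases j using Fin.cases <;> simp
    · simp
  have image_right : splitFirstWeight m (0, 0, 1) =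
      -(1 / 2 : ℝ) • (Pi.single 0 1, 0) + (1 / 2 : ℝ) • (0, 1) := by
    rw [splitFirstWeight_apply]
    ext j
    · cases j using Fin.cases <;> simp [neg_div]
    · simp
  simp only [ContinuousLinearMap.comp_apply, ContinuousLinearMap.inl_apply,
    ContinuousLinearMap.inr_apply, ContinuousLinearMap.single_apply, image_single, image_left,
    image_right, map_add, map_smul, smul_eq_mul, Fin.sum_univ_succ, ← Finset.mul_sum]
  push_cast
  field_simp
  ring

end ParameterLaws

/-- The inner expectation `E_x[f(x) σ(wᵀx + b)]` of `INAL`, at the parameters `θ = (w, b)`. -/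
def alignment {n : ℕ} (f : (Fin n → Bool) → ℝ) (σ : ℝ → ℝ) (θ : (Fin n → ℝ) × ℝ) : ℝ :=
  bExp n fun x => f x * σ (preactivation x θ)

section Alignment

variable {n : ℕ} {σ : ℝ → ℝ}

theorem INAL_eq_integral_alignment_sq (f : (Fin n → Bool) → ℝ) :
    INAL n f σ = ∫ θ, alignment f σ θ ^ 2 ∂initMeasure n := by
  simp only [INAL, alignment, preactivation_apply]

theorem INAL_nonneg (f : (Fin n → Bool) → ℝ) : 0 ≤ INAL n f σ :=
  integral_nonneg fun _ => sq_nonneg _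

theorem integrable_alignment_sq_of_INAL_ne_zero {f : (Fin n → Bool) → ℝ} (hf : INAL n f σ ≠ 0) :
    Integrable (fun θ => alignment f σ θ ^ 2) (initMeasure n) := by
  contrapose! hf
  rw [INAL_eq_integral_alignment_sq, integral_undef hf]

theorem bExp_succ (g : (Fin (n + 1) → Bool) → ℝ) :
    bExp (n + 1) g =
      (bExp n (fun x => g (Fin.cons true x)) + bExp n (fun x => g (Fin.cons false x))) / 2 := by
  rw [bExp, ← (Fin.consEquiv fun _ => Bool).sum_comp, Fintype.sum_prod_type, Fintype.sum_bool,
    bExp, bExp, ← add_div, div_div, pow_succ]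
  rfl

theorem preactivation_cons (b : Bool) (x : Fin n → Bool) (a : ℝ) (w : Fin n → ℝ) (u : ℝ) :
    preactivation (Fin.cons b x : Fin (n + 1) → Bool) (Fin.cons a w, u) =
      preactivation x (w, u + a * bsign b) := by
  simp only [preactivation_apply, Fin.sum_univ_succ, Fin.cons_zero, Fin.cons_succ]
  ring

theorem alignment_cons (f : (Fin (n + 1) → Bool) → ℝ) (a : ℝ) (w : Fin n → ℝ) (u : ℝ) :
    alignment f σ (Fin.cons a w, u) =
      (alignment (fun x => f (Fin.cons true x)) σ (w, u + a) +
        alignment (fun x => f (Fin.cons false x)) σ (w, u - a)) / 2 := by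
  simp [alignment, bExp_succ, preactivation_cons, bsign, sub_eq_add_neg]

theorem alignment_neg (f : (Fin n → Bool) → ℝ) (θ : (Fin n → ℝ) × ℝ) :
    alignment (-f) σ θ = -alignment f σ θ := by
  simp [alignment, bExp, neg_div]

theorem monomial_zero : monomial n 0 = 1 := by
  funext x
  simp [monomial]

theorem monomial_one_cons (b : Bool) :
    (fun x : Fin n → Bool => monomial (n + 1) 1 (Fin.cons b x)) = fun _ => bsign b := by
  funext x
  rw [monomial, Finset.prod_eq_single_of_mem 0 (by simp) fun i hi hi0 => ?_, Fin.cons_zero]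
  exact absurd (Fin.ext (Nat.lt_one_iff.1 (Finset.mem_filter.1 hi).2)) hi0

theorem alignment_one_add_alignment_one (ω : Fin n → ℝ) (p : ℝ × ℝ) :
    alignment 1 σ (ω, p.1) + alignment 1 σ (ω, p.2) =
      2 * alignment (monomial (n + 1) 0) σ (splitFirstWeight n (ω, p)) := by
  rw [← Prod.mk.eta (p := p), splitFirstWeight_apply, monomial_zero, alignment_cons]
  simp only [Pi.one_apply, ← Pi.one_def]
  ring_nf

theorem alignment_one_sub_alignment_one (ω : Fin n → ℝ) (p : ℝ × ℝ) :
    alignment 1 σ (ω, p.1) - alignment 1 σ (ω, p.2) =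
      2 * alignment (monomial (n + 1) 1) σ (splitFirstWeight n (ω, p)) := by
  have bsign_false : (fun _ : Fin n → Bool => bsign false) = -1 := rfl
  have bsign_true : (fun _ : Fin n → Bool => bsign true) = 1 := rfl
  rw [← Prod.mk.eta (p := p), splitFirstWeight_apply, alignment_cons, monomial_one_cons,
    monomial_one_cons, bsign_false, bsign_true, alignment_neg]
  ring_nf

theorem ae_memLp_alignment_of_integrable
    (hzero : Integrable (fun θ => alignment (monomial (n + 1) 0) σ θ ^ 2) (initMeasure (n + 1)))
    (hone : Integrable (fun θ => alignment (monomial (n + 1) 1) σ θ ^ 2) (initMeasure (n + 1))) :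
    ∀ᵐ ω ∂Measure.pi fun _ : Fin n => gaussianReal 0 ((n + 1 : ℕ) : ℝ≥0)⁻¹,
      MemLp (fun u => alignment 1 σ (ω, u)) 2 (gaussianReal 0 (2 * ((n + 1 : ℕ) : ℝ≥0)⁻¹)) := by
  have split := measurePreserving_splitFirstWeight n
  filter_upwards [(split.integrable_comp_of_integrable hzero).prod_right_ae,
    (split.integrable_comp_of_integrable hone).prod_right_ae] with ω hadd hsub
  refine memLp_two_of_integrable_sq_add_of_integrable_sq_sub ?_ ?_
  · simp only [alignment_one_add_alignment_one, mul_pow]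
    exact hadd.const_mul _
  · simp only [alignment_one_sub_alignment_one, mul_pow]
    exact hsub.const_mul _

theorem mem_of_ae_alignment_mem {V : Submodule ℝ (ℝ → ℝ)}
    (hV : ∀ h ∈ V, ∀ c : ℝ, (fun t => h (t + c)) ∈ V) {μ : Measure ℝ} [SigmaFinite μ]
    (hμ : volume ≪ μ) :
    ∀ n : ℕ, (∀ᵐ w ∂Measure.pi fun _ : Fin n => μ, (fun u => alignment 1 σ (w, u)) ∈ V) → σ ∈ V
  | 0, h => by
    rw [Measure.pi_of_empty] at h
    obtain ⟨w, hw⟩ := h.exists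
    simpa [alignment, bExp, preactivation_apply] using hw
  | n + 1, h => by
    have cons_mem : ∀ᵐ p ∂(Measure.pi fun _ : Fin n => μ).prod μ,
        (fun u => alignment 1 σ (Fin.cons p.2 p.1, u)) ∈ V := by
      have cons_pres := ((measurePreserving_piFinSuccAbove (fun _ : Fin (n + 1) => μ) 0).symm).comp
        Measure.measurePreserving_swap
      simpa [Fin.consEquiv] using cons_pres.quasiMeasurePreserving.ae h
    refine mem_of_ae_alignment_mem hV hμ n ?_
    filter_upwards [Measure.ae_ae_of_ae_prod cons_mem] with w hw
    refine mem_of_ae_add_translates_mem hV ?_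
    filter_upwards [hμ.ae_le hw] with a ha
    convert V.smul_mem 2 ha using 1
    funext u
    simp only [alignment_cons, Pi.one_apply, ← Pi.one_def, Pi.smul_apply, smul_eq_mul]
    ring

theorem mem_gaussianL2Below_of_integrable_monomials
    (hzero : Integrable (fun θ => alignment (monomial (n + 1) 0) σ θ ^ 2) (initMeasure (n + 1)))
    (hone : Integrable (fun θ => alignment (monomial (n + 1) 1) σ θ ^ 2) (initMeasure (n + 1))) :
    σ ∈ gaussianL2Below (2 * ((n + 1 : ℕ) : ℝ≥0)⁻¹) := by
  refine mem_of_ae_alignment_mem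
    (fun h hh c => gaussianL2Below.comp_add_const (by positivity) hh c)
    (gaussianReal_absolutelyContinuous' 0 (v := ((n + 1 : ℕ) : ℝ≥0)⁻¹) (by positivity)) n ?_
  filter_upwards [ae_memLp_alignment_of_integrable hzero hone] with ω hω
  exact gaussianL2Below.mem_of_memLp hω

end Alignment

section Bootstrap

variable {n : ℕ} {σ : ℝ → ℝ}

/-- The correlation coefficient, under `initMeasure n`, of the preactivations on `x` and on the
all-ones input. -/
def overlap (x : Fin n → Bool) : ℝ := (∑ i, bsign (x i) + 1) / (n + 1)

theorem overlap_true : overlap (fun _ : Fin n => true) = 1 := by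
  have : (n : ℝ) + 1 ≠ 0 := by positivity
  simp [overlap, bsign, this]

theorem overlap_mul_sq_le_one (hn : n ≠ 0) {x : Fin n → Bool} (hx : x ≠ fun _ => true) :
    (overlap x * (1 + (n : ℝ)⁻¹)) ^ 2 ≤ 1 := by
  have overlap_eq : overlap x * (1 + (n : ℝ)⁻¹) = (∑ i, bsign (x i) + 1) / n := by
    rw [overlap]
    field_simp
  obtain ⟨j, hj⟩ : ∃ j, x j = false := by simpa [funext_iff] using hx
  have two_le : 2 ≤ ∑ i, (1 - bsign (x i)) := by
    have := Finset.single_le_sum (f := fun i => 1 - bsign (x i))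
      (fun i _ => by cases x i <;> norm_num [bsign]) (Finset.mem_univ j)
    norm_num [hj, bsign] at this ⊢
    exact this
  have neg_le : ∑ _i : Fin n, (-1 : ℝ) ≤ ∑ i, bsign (x i) :=
    Finset.sum_le_sum fun i _ => by cases x i <;> norm_num [bsign]
  simp only [Finset.sum_sub_distrib, Finset.sum_const, Finset.card_univ, Fintype.card_fin,
    nsmul_eq_mul, mul_one] at two_le neg_le
  have n_pos : (0 : ℝ) < n := by positivity
  rw [overlap_eq, sq_le_one_iff_abs_le_one, abs_le, le_div_iff₀ n_pos, div_le_iff₀ n_pos]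
  constructor <;> linarith

theorem preactivation_resample (x : Fin n → Bool) (θ : (Fin n → ℝ) × ℝ) (t : ℝ) :
    preactivation x (resample n (θ, t)) =
      overlap x * t + (preactivation x θ - overlap x * preactivation (fun _ => true) θ) := by
  have preactivation_one : preactivation x (1, 1) = ∑ i, bsign (x i) + 1 := by
    simp [preactivation_apply]
  rw [resample_apply, map_add, map_smul, preactivation_one, smul_eq_mul, overlap]
  ring

theorem preactivation_true_resample (θ : (Fin n → ℝ) × ℝ) (t : ℝ) :
    preactivation (fun _ => true) (resample n (θ, t)) = t := by
  rw [preactivation_resample, overlap_true]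
  ring

theorem comp_preactivation_resample_mem_gaussianL2Below (hn : n ≠ 0) {s : ℝ≥0} (hs : 0 < s)
    (hσ : σ ∈ gaussianL2Below s) {x : Fin n → Bool} (hx : x ≠ fun _ => true)
    (θ : (Fin n → ℝ) × ℝ) :
    (fun t => σ (preactivation x (resample n (θ, t)))) ∈
      gaussianL2Below ((1 + (n : ℝ≥0)⁻¹) ^ 2 * s) := by
  simp only [preactivation_resample]
  refine gaussianL2Below.comp_affine hs ?_ _ hσ
  have contraction := overlap_mul_sq_le_one hn hx
  push_cast
  nlinarith [NNReal.coe_pos.2 hs]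

-- Along the line `t ↦ resample n (θ, t)` the alignment of `1` is an average of the functions
-- `t ↦ σ (ρ t + c)`. One of them is `σ` itself and the others have `|ρ| ≤ (1 + 1/n)⁻¹`, so the
-- square-integrability of the average improves that of `σ`.
theorem mem_gaussianL2Below_of_mem_of_integrable (hn : n ≠ 0)
    (hint : Integrable (fun θ => alignment 1 σ θ ^ 2) (initMeasure n)) {s : ℝ≥0} (hs : 0 < s)
    (hσ : σ ∈ gaussianL2Below s) :
    σ ∈ gaussianL2Below (min (1 + (n : ℝ≥0)⁻¹) ((1 + (n : ℝ≥0)⁻¹) ^ 2 * s)) := by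
  set κ : ℝ≥0 := 1 + (n : ℝ≥0)⁻¹
  obtain ⟨θ, line_integrable⟩ :=
    ((measurePreserving_resample hn).integrable_comp_of_integrable hint).prod_right_ae.exists
  let term (x : Fin n → Bool) (t : ℝ) : ℝ := σ (preactivation x (resample n (θ, t)))
  let line (t : ℝ) : ℝ := alignment 1 σ (resample n (θ, t))
  have line_eq : line = (2 ^ n : ℝ)⁻¹ • ∑ x, term x := by
    funext t
    simp [line, term, alignment, bExp, div_eq_inv_mul]
  have term_true : term (fun _ => true) = σ := by
    simp only [term, preactivation_true_resample]
  have term_mem (x : Fin n → Bool) (hx : x ≠ fun _ => true) :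
      term x ∈ gaussianL2Below (κ ^ 2 * s) :=
    comp_preactivation_resample_mem_gaussianL2Below hn hs hσ hx θ
  have line_mem_s : line ∈ gaussianL2Below s := by
    refine line_eq ▸ Submodule.smul_mem _ _ (Submodule.sum_mem _ fun x _ => ?_)
    rcases eq_or_ne x fun _ => true with rfl | hx
    · exact term_true ▸ hσ
    · have le_scaled : s ≤ κ ^ 2 * s := le_mul_of_one_le_left' (one_le_pow₀ le_self_add)
      exact gaussianL2Below.antitone le_scaled (term_mem x hx)
  have line_mem : line ∈ gaussianL2Below κ :=
    gaussianL2Below.mem_of_memLp ((memLp_two_iff_integrable_sq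
      ((gaussianL2Below.aestronglyMeasurable hs line_mem_s).mono_ac
        (gaussianReal_absolutelyContinuous 0 (by positivity)))).2 line_integrable)
  have σ_eq : σ = (2 ^ n : ℝ) • line - ∑ x ∈ Finset.univ.erase fun _ => true, term x := by
    rw [line_eq, smul_inv_smul₀ (by positivity), ← Finset.add_sum_erase _ _ (Finset.mem_univ _),
      term_true, add_sub_cancel_right]
  rw [σ_eq]
  refine Submodule.sub_mem _ (Submodule.smul_mem _ _ ?_) (Submodule.sum_mem _ fun x hx => ?_)
  · exact gaussianL2Below.antitone (min_le_left _ _) line_mem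
  · exact gaussianL2Below.antitone (min_le_right _ _) (term_mem x (Finset.ne_of_mem_erase hx))

theorem mem_gaussianL2Below_one_add_inv (hn : n ≠ 0)
    (hint : Integrable (fun θ => alignment 1 σ θ ^ 2) (initMeasure n)) {s : ℝ≥0} (hs : 0 < s)
    (hσ : σ ∈ gaussianL2Below s) : σ ∈ gaussianL2Below (1 + (n : ℝ≥0)⁻¹) := by
  set κ : ℝ≥0 := 1 + (n : ℝ≥0)⁻¹
  have κ_gt : 1 < κ := lt_add_of_pos_right 1 (by positivity)
  have iterate (j : ℕ) : σ ∈ gaussianL2Below (min κ ((κ ^ 2) ^ j * s)) := by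
    induction j with
    | zero => exact gaussianL2Below.antitone (by simp) hσ
    | succ j ih =>
      refine gaussianL2Below.antitone ?_
        (mem_gaussianL2Below_of_mem_of_integrable hn hint (by positivity) ih)
      rw [mul_min, pow_succ', mul_assoc]
      exact le_min (min_le_left _ _) (min_le_min_right _
        (le_mul_of_one_le_left' (one_le_pow₀ κ_gt.le)))
  obtain ⟨j, hj⟩ := pow_unbounded_of_one_lt (κ / s) (one_lt_pow₀ κ_gt two_ne_zero)
  exact gaussianL2Below.antitone (le_min le_rfl ((div_lt_iff₀ hs).1 hj).le) (iterate j)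

theorem memLp_gaussianReal_of_INAL_ne_zero {m : ℕ}
    (hzero : INAL (m + 1) (monomial (m + 1) 0) σ ≠ 0)
    (hone : INAL (m + 1) (monomial (m + 1) 1) σ ≠ 0) (hmn : m + 1 < n) :
    MemLp σ 2 (gaussianReal 0 (1 + (n : ℝ≥0)⁻¹)) := by
  have zero_integrable := integrable_alignment_sq_of_INAL_ne_zero hzero
  have one_integrable := integrable_alignment_sq_of_INAL_ne_zero hone
  refine mem_gaussianL2Below_one_add_inv m.succ_ne_zero (monomial_zero ▸ zero_integrable)
    (by positivity) (mem_gaussianL2Below_of_integrable_monomials zero_integrable one_integrable)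
    _ ?_
  gcongr

end Bootstrap

section Fourier

variable {n : ℕ}

theorem bExp_comp_equiv (e : Equiv.Perm (Fin n → Bool)) (g : (Fin n → Bool) → ℝ) :
    bExp n (fun x => g (e x)) = bExp n g := by
  rw [bExp, Equiv.sum_comp e, bExp]

theorem bExp_const (c : ℝ) : bExp n (fun _ => c) = c := by
  simp [bExp]

theorem bExp_const_mul (c : ℝ) (g : (Fin n → Bool) → ℝ) :
    bExp n (fun x => c * g x) = c * bExp n g := by
  rw [bExp, ← Finset.mul_sum, mul_div_assoc, bExp]

theorem bExp_add (g h : (Fin n → Bool) → ℝ) :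
    bExp n (fun x => g x + h x) = bExp n g + bExp n h := by
  rw [bExp, Finset.sum_add_distrib, add_div, bExp, bExp]

theorem bExp_sum {ι : Type*} (s : Finset ι) (g : ι → (Fin n → Bool) → ℝ) :
    bExp n (fun x => ∑ i ∈ s, g i x) = ∑ i ∈ s, bExp n (g i) := by
  simp only [bExp, ← Finset.sum_div]
  rw [Finset.sum_comm]

theorem bExp_comm (g : (Fin n → Bool) → (Fin n → Bool) → ℝ) :
    bExp n (fun x => bExp n (g x)) = bExp n fun y => bExp n fun x => g x y := by
  simp only [bExp, ← Finset.sum_div]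
  rw [Finset.sum_comm]

theorem bExp_prod (g : Fin n → Bool → ℝ) :
    bExp n (fun x => ∏ i, g i (x i)) = ∏ i, (g i true + g i false) / 2 := by
  simp only [bExp, Finset.prod_div_distrib, ← Fintype.sum_bool, Fintype.prod_sum, Finset.prod_const,
    Finset.card_univ, Fintype.card_fin]

theorem bExp_chi_mul_chi (S T : Finset (Fin n)) :
    bExp n (fun x => chi S x * chi T x) = if S = T then 1 else 0 := by
  have chi_mul_chi (x : Fin n → Bool) : chi S x * chi T x =
      ∏ i, (if i ∈ S then bsign (x i) else 1) * (if i ∈ T then bsign (x i) else 1) := by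
    simp only [chi, Finset.prod_mul_distrib, Finset.prod_ite_mem, Finset.univ_inter]
  have factor (i : Fin n) :
      ((if i ∈ S then bsign true else 1) * (if i ∈ T then bsign true else 1) +
        (if i ∈ S then bsign false else 1) * (if i ∈ T then bsign false else 1)) / 2 =
          if i ∈ S ↔ i ∈ T then 1 else 0 := by
    by_cases hS : i ∈ S <;> by_cases hT : i ∈ T <;> norm_num [hS, hT, bsign]
  simp only [chi_mul_chi]
  rw [bExp_prod fun i b => (if i ∈ S then bsign b else 1) * (if i ∈ T then bsign b else 1)]
  simp only [factor, Finset.prod_ite_zero, Finset.mem_univ, true_imp_iff, Finset.prod_const_one,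
    Finset.ext_iff]

theorem sum_fourierCoef_sq_le (h : (Fin n → Bool) → ℝ) (s : Finset (Finset (Fin n))) :
    ∑ S ∈ s, fourierCoef n h S ^ 2 ≤ bExp n fun x => h x ^ 2 := by
  set p : (Fin n → Bool) → ℝ := fun x => ∑ S ∈ s, fourierCoef n h S * chi S x with hp
  have correlation (g : (Fin n → Bool) → ℝ) :
      bExp n (fun x => g x * p x) = ∑ S ∈ s, fourierCoef n h S * fourierCoef n g S := by
    simp only [hp, Finset.mul_sum, mul_left_comm (g _), bExp_sum, bExp_const_mul, fourierCoef]
  have fourierCoef_p : ∀ S ∈ s, fourierCoef n p S = fourierCoef n h S := by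
    intro S hS
    simp only [fourierCoef, hp, Finset.sum_mul, mul_assoc, bExp_sum, bExp_const_mul,
      bExp_chi_mul_chi, mul_ite, mul_one, mul_zero, Finset.sum_ite_eq', hS, if_true]
  have sum_fourierCoef_p :
      ∑ S ∈ s, fourierCoef n h S * fourierCoef n p S = ∑ S ∈ s, fourierCoef n h S ^ 2 :=
    Finset.sum_congr rfl fun S hS => by rw [fourierCoef_p S hS, sq]
  have residual : bExp n (fun x => (h x - p x) ^ 2) =
      bExp n (fun x => h x ^ 2) - ∑ S ∈ s, fourierCoef n h S ^ 2 := by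
    have expand (x : Fin n → Bool) :
        (h x - p x) ^ 2 = h x ^ 2 + (-2 * (h x * p x) + p x * p x) := by ring
    simp only [expand, bExp_add, bExp_const_mul, correlation, sum_fourierCoef_p]
    simp only [sq]
    ring
  rw [← sub_nonneg, ← residual]
  exact div_nonneg (Finset.sum_nonneg fun x _ => sq_nonneg _) (by positivity)

/-- Coordinatewise product with the sign vector `z`, as a permutation of the cube. -/
def signMul (z : Fin n → Bool) : Equiv.Perm (Fin n → Bool) :=
  Function.Involutive.toPerm (fun x i => z i == x i) fun x => by
    funext i
    change (z i == (z i == x i)) = x i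
    cases z i <;> cases x i <;> rfl

theorem bsign_signMul (z x : Fin n → Bool) (i : Fin n) :
    bsign (signMul z x i) = bsign (z i) * bsign (x i) := by
  change bsign (z i == x i) = _
  cases z i <;> cases x i <;> simp [bsign]

theorem chi_signMul (S : Finset (Fin n)) (z x : Fin n → Bool) :
    chi S (signMul z x) = chi S z * chi S x := by
  simp only [chi, bsign_signMul, Finset.prod_mul_distrib]

theorem signMul_signMul_self (x y : Fin n → Bool) : signMul (signMul x y) x = y := by
  funext i
  change ((x i == y i) == x i) = y i
  cases x i <;> cases y i <;> rfl

theorem fourierCoef_convolution (f g : (Fin n → Bool) → ℝ) (S : Finset (Fin n)) :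
    fourierCoef n (fun z => bExp n fun x => f x * g (signMul z x)) S =
      fourierCoef n f S * fourierCoef n g S := by
  have translate (x : Fin n → Bool) :
      bExp n (fun z => g (signMul z x) * chi S z) = chi S x * fourierCoef n g S := by
    rw [← bExp_comp_equiv (signMul x), fourierCoef, ← bExp_const_mul]
    congr 1
    funext y
    rw [signMul_signMul_self, chi_signMul]
    ring
  calc fourierCoef n (fun z => bExp n fun x => f x * g (signMul z x)) S
      = bExp n fun z => bExp n fun x => f x * (g (signMul z x) * chi S z) := by
        simp only [fourierCoef, mul_comm _ (chi S _), ← bExp_const_mul, mul_left_comm]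
    _ = bExp n fun x => f x * (chi S x * fourierCoef n g S) := by
        rw [bExp_comm]
        simp only [bExp_const_mul, translate]
    _ = fourierCoef n f S * fourierCoef n g S := by
        simp only [← mul_assoc]
        simp only [mul_comm _ (fourierCoef n g S), bExp_const_mul]
        rfl

end Fourier

section Symmetries

variable {n : ℕ} {σ : ℝ → ℝ}

/-- Multiply the weights coordinatewise by the sign vector `z`. -/
def flipWeights (z : Fin n → Bool) : (Fin n → ℝ) × ℝ ≃ᵐ (Fin n → ℝ) × ℝ :=
  (MeasurableEquiv.piCongrRight fun i =>
    MeasurableEquiv.mulLeft₀ (bsign (z i)) (by cases z i <;> simp [bsign])).prodCongr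
      (MeasurableEquiv.refl ℝ)

theorem flipWeights_apply (z : Fin n → Bool) (θ : (Fin n → ℝ) × ℝ) :
    flipWeights z θ = (fun i => bsign (z i) * θ.1 i, θ.2) :=
  rfl

theorem measurePreserving_flipWeights (z : Fin n → Bool) :
    MeasurePreserving (flipWeights z) (initMeasure n) (initMeasure n) := by
  refine .prod (measurePreserving_pi _ _ fun i => ⟨measurable_const_mul (bsign (z i)), ?_⟩) (.id _)
  change (gaussianReal 0 _).map (bsign (z i) * ·) = _
  rw [gaussianReal_map_const_mul, mul_zero]
  congr 1
  exact NNReal.eq (by simp [bsign_sq])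

theorem preactivation_flipWeights (x z : Fin n → Bool) (θ : (Fin n → ℝ) × ℝ) :
    preactivation x (flipWeights z θ) = preactivation (signMul z x) θ := by
  simp only [preactivation_apply, flipWeights_apply, bsign_signMul, mul_left_comm, mul_assoc]

theorem fourierCoef_alignment_flipWeights (f : (Fin n → Bool) → ℝ) (θ : (Fin n → ℝ) × ℝ)
    (S : Finset (Fin n)) :
    fourierCoef n (fun z => alignment f σ (flipWeights z θ)) S =
      fourierCoef n f S * alignment (chi S) σ θ := by
  simp only [alignment, preactivation_flipWeights, mul_comm (chi S _)]
  exact fourierCoef_convolution f (fun x => σ (preactivation x θ)) S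

/-- Reindex the weights along the permutation `π`. -/
def permuteWeights (π : Equiv.Perm (Fin n)) : (Fin n → ℝ) × ℝ ≃ᵐ (Fin n → ℝ) × ℝ :=
  (MeasurableEquiv.piCongrLeft (fun _ => ℝ) π.symm).prodCongr (MeasurableEquiv.refl ℝ)

theorem permuteWeights_apply (π : Equiv.Perm (Fin n)) (θ : (Fin n → ℝ) × ℝ) :
    permuteWeights π θ = (θ.1 ∘ π, θ.2) := by
  refine Prod.ext (funext fun i => ?_) rfl
  change MeasurableEquiv.piCongrLeft (fun _ => ℝ) π.symm θ.1 i = θ.1 (π i)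
  simp [MeasurableEquiv.coe_piCongrLeft, Equiv.piCongrLeft_apply]

theorem measurePreserving_permuteWeights (π : Equiv.Perm (Fin n)) :
    MeasurePreserving (permuteWeights π) (initMeasure n) (initMeasure n) :=
  (measurePreserving_piCongrLeft (fun _ => gaussianReal 0 (n : ℝ≥0)⁻¹) π.symm).prod (.id _)

theorem preactivation_permuteWeights (π : Equiv.Perm (Fin n)) (x : Fin n → Bool)
    (θ : (Fin n → ℝ) × ℝ) :
    preactivation (x ∘ π) (permuteWeights π θ) = preactivation x θ := by
  simp only [preactivation_apply, permuteWeights_apply, Function.comp_apply,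
    Equiv.sum_comp π fun i => θ.1 i * bsign (x i)]

theorem INAL_comp_perm (π : Equiv.Perm (Fin n)) (f : (Fin n → Bool) → ℝ) :
    INAL n (fun x => f (x ∘ π)) σ = INAL n f σ := by
  have alignment_comp (θ : (Fin n → ℝ) × ℝ) :
      alignment (fun x => f (x ∘ π)) σ θ = alignment f σ (permuteWeights π θ) := by
    simp only [alignment, ← preactivation_permuteWeights π _ θ]
    exact bExp_comp_equiv (π.symm.arrowCongr (Equiv.refl Bool))
      fun x => f x * σ (preactivation x (permuteWeights π θ))
  rw [INAL_eq_integral_alignment_sq, INAL_eq_integral_alignment_sq]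
  simp only [alignment_comp]
  exact (measurePreserving_permuteWeights π).integral_comp' fun θ => alignment f σ θ ^ 2

theorem exists_perm_map_eq {α : Type*} [Finite α] {s t : Finset α} (h : s.card = t.card) :
    ∃ π : Equiv.Perm α, s.map π.toEmbedding = t := by
  classical
  have := Fintype.ofFinite α
  refine ⟨(Finset.equivOfCardEq h).extendSubtype, Finset.eq_of_subset_of_card_le ?_ ?_⟩
  · exact Finset.map_subset_iff_subset_preimage.2 fun i hi => Finset.mem_preimage.2 <|
      Equiv.extendSubtype_mem _ i hi
  · rw [Finset.card_map, h]

theorem INAL_chi (S : Finset (Fin n)) : INAL n (chi S) σ = INAL n (monomial n S.card) σ := by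
  obtain ⟨π, hπ⟩ := exists_perm_map_eq (s := univ.filter fun i : Fin n => (i : ℕ) < S.card)
    (t := S) <| by
      rw [Fin.card_filter_val_lt, min_eq_right (card_finset_fin_le S)]
  rw [← INAL_comp_perm π (monomial n _)]
  congr 1
  funext x
  conv_lhs => rw [chi, ← hπ, Finset.prod_map]
  rfl

end Symmetries

section FourierWeight

variable {n : ℕ} {σ : ℝ → ℝ}

theorem memLp_alignment (hn : n ≠ 0) (hσ : MemLp σ 2 (gaussianReal 0 (1 + (n : ℝ≥0)⁻¹)))
    (f : (Fin n → Bool) → ℝ) : MemLp (alignment f σ) 2 (initMeasure n) := by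
  unfold alignment bExp
  simp only [div_eq_inv_mul]
  exact (memLp_finsetSum _ fun x _ =>
    (hσ.comp_measurePreserving (measurePreserving_preactivation hn x)).const_mul (f x)).const_mul _

/-- The Fourier weight `W^{=k}(f)` on the degree-`k` characters. -/
def weightEQ (n k : ℕ) (f : (Fin n → Bool) → ℝ) : ℝ :=
  ∑ S ∈ univ.filter fun S : Finset (Fin n) => S.card = k, fourierCoef n f S ^ 2

theorem weightLE_eq_sum_weightEQ (n k : ℕ) (f : (Fin n → Bool) → ℝ) :
    weightLE n k f = ∑ j ∈ range (k + 1), weightEQ n j f := by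
  rw [weightLE, ← Finset.sum_fiberwise_of_maps_to (g := Finset.card) (t := range (k + 1))
    fun S hS => mem_range_succ_iff.2 (mem_filter.1 hS).2]
  refine Finset.sum_congr rfl fun j hj => ?_
  rw [weightEQ, filter_filter]
  congr! 2 with S
  exact and_iff_right_of_imp fun hS => hS.trans_le (mem_range_succ_iff.1 hj)

theorem weightEQ_nonneg (n k : ℕ) (f : (Fin n → Bool) → ℝ) : 0 ≤ weightEQ n k f :=
  Finset.sum_nonneg fun _ _ => sq_nonneg _

theorem weightEQ_mul_INAL_monomial_eq_integral (hn : n ≠ 0)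
    (hσ : MemLp σ 2 (gaussianReal 0 (1 + (n : ℝ≥0)⁻¹))) (k : ℕ) (f : (Fin n → Bool) → ℝ) :
    weightEQ n k f * INAL n (monomial n k) σ =
      ∫ θ, ∑ S ∈ univ.filter fun S : Finset (Fin n) => S.card = k,
        fourierCoef n (fun z => alignment f σ (flipWeights z θ)) S ^ 2 ∂initMeasure n := by
  simp only [fourierCoef_alignment_flipWeights, mul_pow]
  rw [integral_finsetSum _ fun S _ => (memLp_alignment hn hσ (chi S)).integrable_sq.const_mul _,
    weightEQ, Finset.sum_mul]
  refine Finset.sum_congr rfl fun S hS => ?_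
  rw [integral_const_mul, ← INAL_eq_integral_alignment_sq, INAL_chi, (mem_filter.1 hS).2]

theorem weightEQ_mul_INAL_monomial_le (hn : n ≠ 0)
    (hσ : MemLp σ 2 (gaussianReal 0 (1 + (n : ℝ≥0)⁻¹))) (k : ℕ) (f : (Fin n → Bool) → ℝ) :
    weightEQ n k f * INAL n (monomial n k) σ ≤ INAL n f σ := by
  have integrable_flip (z : Fin n → Bool) :
      Integrable (fun θ => alignment f σ (flipWeights z θ) ^ 2) (initMeasure n) :=
    (measurePreserving_flipWeights z).integrable_comp_of_integrable
      (memLp_alignment hn hσ f).integrable_sq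
  have integral_flip (z : Fin n → Bool) :
      ∫ θ, alignment f σ (flipWeights z θ) ^ 2 ∂initMeasure n = INAL n f σ := by
    rw [INAL_eq_integral_alignment_sq]
    exact (measurePreserving_flipWeights z).integral_comp' fun θ => alignment f σ θ ^ 2
  calc weightEQ n k f * INAL n (monomial n k) σ
      = ∫ θ, ∑ S ∈ univ.filter fun S : Finset (Fin n) => S.card = k,
          fourierCoef n (fun z => alignment f σ (flipWeights z θ)) S ^ 2 ∂initMeasure n :=
        weightEQ_mul_INAL_monomial_eq_integral hn hσ k f
    _ ≤ ∫ θ, bExp n (fun z => alignment f σ (flipWeights z θ) ^ 2) ∂initMeasure n :=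
        integral_mono_of_nonneg (.of_forall fun θ => Finset.sum_nonneg fun _ _ => sq_nonneg _)
          ((integrable_finsetSum _ fun z _ => integrable_flip z).div_const _)
          (.of_forall fun θ => sum_fourierCoef_sq_le _ _)
    _ = bExp n (fun z => ∫ θ, alignment f σ (flipWeights z θ) ^ 2 ∂initMeasure n) := by
        simp only [bExp, integral_div, integral_finsetSum _ fun z _ => integrable_flip z]
    _ = INAL n f σ := by
        simp only [integral_flip, bExp_const]

end FourierWeight

theorem eventually_ne_zero_of_inv_pow_isBigO {c : ℕ} {b : ℕ → ℝ}
    (hb : (fun n : ℕ => ((n : ℝ) ^ c)⁻¹) =O[atTop] b) : ∀ᶠ n in atTop, b n ≠ 0 := by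
  filter_upwards [hb.eq_zero_imp, eventually_ne_atTop 0] with n hzero hn hbn
  exact inv_ne_zero (pow_ne_zero c (Nat.cast_ne_zero.2 hn)) (hzero hbn)

theorem Negligible.sum {ι : Type*} {s : Finset ι} {g : ι → ℕ → ℝ}
    (hg : ∀ i ∈ s, Negligible (g i)) : Negligible fun n => ∑ i ∈ s, g i n := by
  intro c
  simpa only [Finset.mul_sum, Finset.sum_const_zero] using
    tendsto_finsetSum s fun i hi => hg i hi c

theorem Negligible.of_mul_isBigO {c : ℕ} {a b g : ℕ → ℝ} (hg : Negligible g)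
    (hb : (fun n : ℕ => ((n : ℝ) ^ c)⁻¹) =O[atTop] b) (hab : (fun n => a n * b n) =O[atTop] g) :
    Negligible a := by
  intro d
  have a_isBigO : (fun n : ℕ => a n * ((n : ℝ) ^ c)⁻¹) =O[atTop] g :=
    ((isBigO_refl a atTop).mul hb).trans hab
  refine IsBigO.trans_tendsto ?_ (hg (d + c))
  refine ((isBigO_refl (fun n : ℕ => (n : ℝ) ^ (d + c)) atTop).mul a_isBigO).congr' ?_ .rfl
  filter_upwards [eventually_ne_atTop 0] with n hn
  field_simp
  ring

theorem eventually_memLp_gaussianReal {σ : ℝ → ℝ}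
    (hzero : ∀ᶠ n in atTop, INAL n (monomial n 0) σ ≠ 0)
    (hone : ∀ᶠ n in atTop, INAL n (monomial n 1) σ ≠ 0) :
    ∀ᶠ n : ℕ in atTop, MemLp σ 2 (gaussianReal 0 (1 + (n : ℝ≥0)⁻¹)) := by
  obtain ⟨m, hm_zero, hm_one⟩ := ((tendsto_add_atTop_nat 1).eventually (hzero.and hone)).exists
  filter_upwards [eventually_gt_atTop (m + 1)] with n hmn
  exact memLp_gaussianReal_of_INAL_ne_zero hm_zero hm_one hmn

theorem negligible_inal_implies_high_degree_general
    (σ : ℝ → ℝ)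
    (hcorr : ∀ k : ℕ, ∃ c : ℕ,
      (fun n : ℕ => ((n : ℝ) ^ c)⁻¹) =O[atTop] fun n : ℕ => INAL n (monomial n k) σ)
    (f : ∀ n : ℕ, (Fin n → Bool) → ℝ)
    (hINAL : Negligible fun n => INAL n (f n) σ) :
    ∀ k : ℕ, Negligible fun n => weightLE n k (f n) := by
  intro k
  simp only [weightLE_eq_sum_weightEQ]
  refine Negligible.sum fun j _ => ?_
  have INAL_monomial_ne_zero (i : ℕ) : ∀ᶠ n in atTop, INAL n (monomial n i) σ ≠ 0 :=
    (hcorr i).elim fun _ => eventually_ne_zero_of_inv_pow_isBigO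
  obtain ⟨c, hc⟩ := hcorr j
  refine hINAL.of_mul_isBigO hc (IsBigO.of_bound' ?_)
  filter_upwards [eventually_memLp_gaussianReal (INAL_monomial_ne_zero 0) (INAL_monomial_ne_zero 1),
    eventually_ne_atTop 0] with n hσ hn
  rw [Real.norm_of_nonneg (mul_nonneg (weightEQ_nonneg n j (f n)) (INAL_nonneg _)),
    Real.norm_of_nonneg (INAL_nonneg _)]
  exact weightEQ_mul_INAL_monomial_le hn hσ j (f n)

/-- If `σ` is correlating (each `INAL(M_k, σ)` is noticeable) and `(f_n)` is a
Boolean sequence with negligible `INAL(f_n, σ)`, then `(f_n)` is high-degree: `W^{≤k}(f_n)`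
is negligible for every fixed `k`. -/
theorem negligible_inal_implies_high_degree
    (σ : ℝ → ℝ)
    (hcorr : ∀ k : ℕ, ∃ c : ℕ,
      (fun n : ℕ => ((n : ℝ) ^ c)⁻¹) =O[atTop] fun n : ℕ => INAL n (monomial n k) σ)
    (f : ∀ n : ℕ, (Fin n → Bool) → ℝ) (hf : ∀ n, IsBooleanFn (f n))
    (hINAL : Negligible fun n => INAL n (f n) σ) :
    ∀ k : ℕ, Negligible fun n => weightLE n k (f n) :=
  negligible_inal_implies_high_degree_general σ hcorr f hINAL
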